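/- Assume σ > 0. Then there exist R > 0 and a sequence (b_n)_{n≥−1} of real numbers with b_{−1} = √2/σ such that for all real q > R: ζ_{N+1}(q) = ∑_{n=−1}^∞ b_n q^{−n/2} and ζ̂_{N̂+1}(q) = ∑_{n=−1}^∞ (−1)^{n+1} b_n q^{−n/2}; the functions q ↦ ζ_{N+1}(q) and q ↦ ζ̂_{N̂+1}(q) are differentiable on (R, ∞); and the derivatives are given by the termwise-differentiated series ζ_{N+1}′(q) = ∑_{n=1}^∞ ((2−n)/2)·b_{n−2}·q^{−n/2} and −ζ̂_{N̂+1}′(q) = ∑_{n=1}^∞ (−1)^n·((2−n)/2)·b_{n−2}·q^{−n/2}, both of which converge absolutely for every q ∈ ℂ with |q| > R. -/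

import Mathlib

/-- The Laplace exponent of a hyperexponential Lévy process, extended to a rational
function on `ℂ`. -/
noncomputable def psi (σ A : ℝ) (N Nh : ℕ) (aa ρ ah ρh : ℕ → ℝ) (z : ℂ) : ℂ :=
  (σ : ℂ) ^ 2 * z ^ 2 / 2 + (A : ℂ) * z
    + z * ∑ ℓ ∈ Finset.Icc 1 N, (aa ℓ : ℂ) / ((ρ ℓ : ℂ) - z)
    - z * ∑ ℓ ∈ Finset.Icc 1 Nh, (ah ℓ : ℂ) / ((ρh ℓ : ℂ) + z)

/-!
In the variable `w = 1 / z` the equation `ψ(z) = q` reads `h w / w ^ 2 = q`, where `h` is analytic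
at `0` with `h 0 = σ ^ 2 / 2 > 0`. Hence `φ w = w / √(h w)` is a local analytic coordinate at `0`,
and the analytic function `1 / √(h w)` can be written as `g (φ w)` with `g` analytic at `0`. A large
root `z` has `φ (1 / z) = ± 1 / √q`, with the sign of `z`, so `|z| = √q * g (± 1 / √q)`: both roots
are governed by the Taylor coefficients of the same `g`. The roots do become large, because on the
outer branches the pole terms of `ψ` have a sign and `ψ` is bounded there by a quadratic polynomial.
-/

open Filter Topology Asymptotics

section AnalyticGerms

variable {𝕜 : Type*} [NontriviallyNormedField 𝕜]

lemma exists_coeff_isBigO_pow_hasSum {f : 𝕜 → 𝕜} (hf : AnalyticAt 𝕜 f 0) :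
    ∃ (b : ℕ → 𝕜) (K : ℝ), b 0 = f 0 ∧ b =O[atTop] (fun n => K ^ n) ∧
      ∀ᶠ x in 𝓝 0, HasSum (fun n => b n * x ^ n) (f x) := by
  obtain ⟨p, hp⟩ := hf
  obtain ⟨C, K, -, -, hbound⟩ := p.le_mul_pow_of_radius_pos hp.radius_pos
  refine ⟨p.coeff, K, hp.coeff_zero 1, .of_bound C <| .of_forall fun n => ?_, ?_⟩
  · rw [← p.norm_apply_eq_norm_coef]
    refine (hbound n).trans (mul_le_mul_of_nonneg_left (Real.le_norm_self _) ?_)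
    simpa using (norm_nonneg _).trans (hbound 0)
  · simpa only [zero_add, smul_eq_mul, mul_comm] using hasFPowerSeriesAt_iff.1 hp

variable [CompleteSpace 𝕜] [CharZero 𝕜]

lemma exists_analyticAt_comp_eventuallyEq {E : Type*} [NormedAddCommGroup E] [NormedSpace 𝕜 E]
    {φ : 𝕜 → 𝕜} {u : 𝕜 → E} {x : 𝕜} (hφ : AnalyticAt 𝕜 φ x)
    (hφ' : deriv φ x ≠ 0) (hu : AnalyticAt 𝕜 u x) :
    ∃ g : 𝕜 → E, AnalyticAt 𝕜 g (φ x) ∧ g ∘ φ =ᶠ[𝓝 x] u := by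
  have hleft := hφ.hasStrictDerivAt.eventually_left_inverse hφ'
  refine ⟨u ∘ hφ.hasStrictDerivAt.localInverse φ _ x hφ',
    AnalyticAt.comp ?_ (hφ.analyticAt_localInverse hφ'), .fun_comp hleft u⟩
  rwa [hleft.self_of_nhds]

lemma exists_analyticAt_comp_id_mul_eventuallyEq {u : 𝕜 → 𝕜} (hu : AnalyticAt 𝕜 u 0)
    (hu0 : u 0 ≠ 0) :
    ∃ g : 𝕜 → 𝕜, AnalyticAt 𝕜 g 0 ∧ ∀ᶠ w in 𝓝 0, g (w * u w) = u w := by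
  have hderiv : HasDerivAt (fun w => w * u w) (u 0) 0 := by
    simpa using (hasDerivAt_id (0 : 𝕜)).fun_mul hu.differentiableAt.hasDerivAt
  obtain ⟨g, hg, hgu⟩ := exists_analyticAt_comp_eventuallyEq (analyticAt_id.fun_mul hu)
    (by simpa only [id, hderiv.deriv] using hu0) hu
  exact ⟨g, by simpa using hg, hgu⟩

end AnalyticGerms

section InverseSqrtSeries

lemma rpow_one_sub_div_two {q : ℝ} (hq : 0 < q) (n : ℕ) :
    q ^ ((1 - (n : ℝ)) / 2) = √q * (√q)⁻¹ ^ n := by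
  rw [inv_pow, ← Real.rpow_natCast, Real.sqrt_eq_rpow, ← Real.rpow_mul hq.le,
    ← Real.rpow_neg hq.le, ← Real.rpow_add hq]
  ring_nf

lemma rpow_neg_add_one_div_two {q : ℝ} (hq : 0 ≤ q) (n : ℕ) :
    q ^ (-((n : ℝ) + 1) / 2) = (√q)⁻¹ ^ (n + 1) := by
  rw [inv_pow, ← Real.rpow_natCast, Real.sqrt_eq_rpow, ← Real.rpow_mul hq, ← Real.rpow_neg hq]
  push_cast
  ring_nf

lemma norm_inv_sqrt_lt_one {K q : ℝ} (hq : K ^ 2 < q) : ‖K * (√q)⁻¹‖ < 1 := by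
  have hsqrt : |K| < √q := Real.lt_sqrt_of_sq_lt (by rwa [sq_abs])
  rw [← div_eq_mul_inv, norm_div, Real.norm_eq_abs, Real.norm_of_nonneg (Real.sqrt_nonneg q)]
  exact (div_lt_one ((abs_nonneg K).trans_lt hsqrt)).2 hsqrt

lemma summable_pow_mul_mul_pow_of_isBigO {𝕜 : Type*} [NormedField 𝕜] [CompleteSpace 𝕜]
    {b : ℕ → 𝕜} {K x : 𝕜} (hb : b =O[atTop] (fun n => K ^ n)) (hx : ‖K * x‖ < 1) (k : ℕ) :
    Summable fun n : ℕ => (n : 𝕜) ^ k * b n * x ^ n := by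
  refine summable_of_isBigO_nat (summable_norm_pow_mul_geometric_of_norm_lt_one k hx) ?_
  simpa only [mul_pow, mul_assoc] using
    ((isBigO_refl (fun n : ℕ => (n : 𝕜) ^ k) atTop).mul
      (hb.mul (isBigO_refl (fun n => x ^ n) atTop))).norm_right

variable {b : ℕ → ℝ} {K : ℝ}

lemma summable_mul_rpow_one_sub_div_two (hb : b =O[atTop] (fun n => K ^ n)) {q : ℝ}
    (hq : K ^ 2 < q) : Summable fun n : ℕ => b n * q ^ ((1 - (n : ℝ)) / 2) := by
  refine ((summable_pow_mul_mul_pow_of_isBigO hb (norm_inv_sqrt_lt_one hq) 0).mul_left √q).congr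
    fun n => ?_
  rw [rpow_one_sub_div_two ((sq_nonneg K).trans_lt hq)]
  ring

lemma summable_mul_rpow_neg_add_one_div_two (hb : b =O[atTop] (fun n => K ^ n)) {q : ℝ}
    (hq : K ^ 2 < q) :
    Summable fun n : ℕ => (1 - (n : ℝ)) / 2 * b n * q ^ (-((n : ℝ) + 1) / 2) := by
  have hsum := summable_pow_mul_mul_pow_of_isBigO hb (norm_inv_sqrt_lt_one hq)
  refine (((hsum 0).sub (hsum 1)).mul_left ((√q)⁻¹ / 2)).congr fun n => ?_
  rw [rpow_neg_add_one_div_two ((sq_nonneg K).trans hq.le)]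
  ring

lemma summable_norm_mul_cpow_neg_add_one_div_two (hb : b =O[atTop] (fun n => K ^ n)) {q : ℂ}
    (hq : K ^ 2 < ‖q‖) :
    Summable fun n : ℕ => ‖(((1 - (n : ℝ)) / 2 * b n : ℝ) : ℂ) * q ^ (-((n : ℂ) + 1) / 2)‖ := by
  refine (summable_mul_rpow_neg_add_one_div_two hb hq).norm.congr fun n => ?_
  rw [norm_mul, norm_mul _ (q ^ _), Complex.norm_real,
    Real.norm_of_nonneg (Real.rpow_nonneg (norm_nonneg q) _), ← Complex.norm_cpow_real]
  push_cast
  rfl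

lemma hasDerivAt_tsum_mul_rpow {ι : Type*} {b p : ι → ℝ} (hp : ∀ i, p i ≤ 1) {q₀ q : ℝ}
    (hq₀ : 0 < q₀) (hq : q₀ < q) (hsum : Summable fun i => b i * q ^ p i)
    (hsum' : Summable fun i => p i * b i * q₀ ^ (p i - 1)) :
    HasDerivAt (fun y => ∑' i, b i * y ^ p i) (∑' i, p i * b i * q ^ (p i - 1)) q := by
  refine hasDerivAt_tsum_of_isPreconnected (g := fun i y => b i * y ^ p i)
    (g' := fun i y => p i * b i * y ^ (p i - 1)) hsum'.norm isOpen_Ioi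
    isPreconnected_Ioi (fun i y hy => ?_) (fun i y hy => ?_) (Set.mem_Ioi.2 hq) hsum hq
  · exact ((Real.hasDerivAt_rpow_const (.inl (hq₀.trans hy).ne')).const_mul (b i)).congr_deriv
      (by ring)
  · have hpow : y ^ (p i - 1) ≤ q₀ ^ (p i - 1) :=
      Real.rpow_le_rpow_of_nonpos hq₀ (le_of_lt hy) (sub_nonpos.2 (hp i))
    rw [norm_mul, norm_mul _ (q₀ ^ _), Real.norm_of_nonneg (Real.rpow_nonneg (hq₀.trans hy).le _),
      Real.norm_of_nonneg (Real.rpow_nonneg hq₀.le _)]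
    gcongr

lemma hasDerivAt_tsum_mul_rpow_one_sub_div_two (hb : b =O[atTop] (fun n => K ^ n)) {q : ℝ}
    (hq : K ^ 2 < q) :
    HasDerivAt (fun y : ℝ => ∑' n : ℕ, b n * y ^ ((1 - (n : ℝ)) / 2))
      (∑' n : ℕ, (1 - (n : ℝ)) / 2 * b n * q ^ (-((n : ℝ) + 1) / 2)) q := by
  obtain ⟨q₀, hKq₀, hq₀⟩ := exists_between hq
  have hexp (n : ℕ) : (1 - (n : ℝ)) / 2 - 1 = -((n : ℝ) + 1) / 2 := by ring
  have hle (n : ℕ) : (1 - (n : ℝ)) / 2 ≤ 1 := by linarith [n.cast_nonneg (α := ℝ)]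
  simpa only [hexp] using hasDerivAt_tsum_mul_rpow hle ((sq_nonneg K).trans_lt hKq₀) hq₀
    (summable_mul_rpow_one_sub_div_two hb hq)
    (by simpa only [hexp] using summable_mul_rpow_neg_add_one_div_two hb hKq₀)

lemma hasDerivAt_of_eventually_hasSum (hb : b =O[atTop] (fun n => K ^ n)) {z : ℝ → ℝ} {q : ℝ}
    (hq : K ^ 2 < q)
    (hz : ∀ᶠ y in 𝓝 q, HasSum (fun n : ℕ => b n * y ^ ((1 - (n : ℝ)) / 2)) (z y)) :
    HasDerivAt z (∑' n : ℕ, (1 - (n : ℝ)) / 2 * b n * q ^ (-((n : ℝ) + 1) / 2)) q :=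
  (hasDerivAt_tsum_mul_rpow_one_sub_div_two hb hq).congr_of_eventuallyEq <|
    hz.mono fun _ hy => hy.tsum_eq.symm

end InverseSqrtSeries

section LargeSolutions

lemma eventually_eq_sqrt_mul_of_sq_mul_eq {g h z : ℝ → ℝ} {s : ℝ}
    (hg : ∀ᶠ w in 𝓝 0, g (w * (√(h w))⁻¹) = (√(h w))⁻¹) (hz : Tendsto z atTop atTop)
    (hzq : ∀ᶠ q in atTop, z q ^ 2 * h (s * (z q)⁻¹) = q) :
    ∀ᶠ q in atTop, z q = √q * g (s * (√q)⁻¹) := by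
  have hw : Tendsto (fun q => s * (z q)⁻¹) atTop (𝓝 0) := by
    simpa using hz.inv_tendsto_atTop.const_mul s
  filter_upwards [hw.eventually hg, hzq, hz.eventually_gt_atTop 0, eventually_gt_atTop 0]
    with q hgq hq hz_pos hq_pos
  have hsqrt : √q = z q * √(h (s * (z q)⁻¹)) := by
    rw [← Real.sqrt_sq hz_pos.le, ← Real.sqrt_mul (sq_nonneg _), Real.sqrt_sq hz_pos.le, hq]
  have hsqrt_ne : √(h (s * (z q)⁻¹)) ≠ 0 :=
    right_ne_zero_of_mul (hsqrt ▸ (Real.sqrt_pos.2 hq_pos).ne')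
  rw [hsqrt, mul_inv, ← mul_assoc s, hgq, mul_inv_cancel_right₀ hsqrt_ne]

-- The parameter `s` will be the sign of a large solution and `z` its absolute value.
lemma exists_coeff_hasSum_of_sq_mul_eq {h : ℝ → ℝ} (hh : AnalyticAt ℝ h 0) (h0 : 0 < h 0) :
    ∃ (b : ℕ → ℝ) (K : ℝ), b 0 = (√(h 0))⁻¹ ∧ b =O[atTop] (fun n => K ^ n) ∧
      ∀ (s : ℝ) (z : ℝ → ℝ), Tendsto z atTop atTop →
        (∀ᶠ q in atTop, z q ^ 2 * h (s * (z q)⁻¹) = q) →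
        ∀ᶠ q in atTop, HasSum (fun n : ℕ => s ^ n * b n * q ^ ((1 - (n : ℝ)) / 2)) (z q) := by
  have hu : AnalyticAt ℝ (fun w => (√(h w))⁻¹) 0 :=
    ((Real.contDiffAt_sqrt h0.ne').analyticAt.comp hh).inv (Real.sqrt_pos.2 h0).ne'
  obtain ⟨g, hg, hgu⟩ :=
    exists_analyticAt_comp_id_mul_eventuallyEq hu (inv_ne_zero (Real.sqrt_pos.2 h0).ne')
  obtain ⟨b, K, hb0, hb, hbg⟩ := exists_coeff_isBigO_pow_hasSum hg
  have hg0 : g 0 = (√(h 0))⁻¹ := by simpa only [zero_mul] using hgu.self_of_nhds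
  refine ⟨b, K, hb0.trans hg0, hb, fun s z hz hzq => ?_⟩
  have hx : Tendsto (fun q : ℝ => s * (√q)⁻¹) atTop (𝓝 0) := by
    simpa using Real.tendsto_sqrt_atTop.inv_tendsto_atTop.const_mul s
  filter_upwards [eventually_eq_sqrt_mul_of_sq_mul_eq hgu hz hzq, hx.eventually hbg,
    eventually_gt_atTop 0] with q hzg hsum hq
  rw [hzg]
  refine (hsum.mul_left √q).congr_fun fun n => ?_
  rw [rpow_one_sub_div_two hq, mul_pow]
  ring

lemma tendsto_atTop_of_tendsto_comp_atTop {α : Type*} {l : Filter α} {z : α → ℝ} {p : ℝ → ℝ}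
    (hp : Continuous p) {m : ℝ} (hz : ∀ᶠ x in l, m ≤ z x) (hpz : Tendsto (p ∘ z) l atTop) :
    Tendsto z l atTop := by
  refine tendsto_atTop.2 fun M => ?_
  obtain ⟨B, hB⟩ := (isCompact_Icc (a := m) (b := M)).bddAbove_image hp.continuousOn
  filter_upwards [hz, hpz.eventually_gt_atTop B] with x hmz hBz
  by_contra! hzM
  exact hBz.not_ge (hB ⟨z x, ⟨hmz, hzM.le⟩, rfl⟩)

end LargeSolutions

section LaplaceExponent

variable {σ A : ℝ} {N Nh : ℕ} {aa ρ ah ρh : ℕ → ℝ}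

lemma psi_neg (z : ℂ) :
    psi σ A N Nh aa ρ ah ρh (-z) = psi σ (-A) Nh N ah ρh aa ρ z := by
  simp only [psi, Complex.ofReal_neg, sub_neg_eq_add, ← sub_eq_add_neg]
  ring

lemma psi_ofReal (x : ℝ) :
    psi σ A N Nh aa ρ ah ρh x =
      ((σ ^ 2 * x ^ 2 / 2 + A * x + x * ∑ ℓ ∈ Finset.Icc 1 N, aa ℓ / (ρ ℓ - x)
        - x * ∑ ℓ ∈ Finset.Icc 1 Nh, ah ℓ / (ρh ℓ + x) : ℝ) : ℂ) := by
  push_cast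
  rfl

/-- The real function `w ↦ w ^ 2 * ψ(1 / w)`, which describes the Laplace exponent near infinity,
written so that it also has its limiting value `σ ^ 2 / 2` at `w = 0`. -/
noncomputable def psiAtInfinity (σ A : ℝ) (N Nh : ℕ) (aa ρ ah ρh : ℕ → ℝ) (w : ℝ) : ℝ :=
  σ ^ 2 / 2 + A * w + w ^ 2 * ∑ ℓ ∈ Finset.Icc 1 N, aa ℓ / (ρ ℓ * w - 1)
    - w ^ 2 * ∑ ℓ ∈ Finset.Icc 1 Nh, ah ℓ / (ρh ℓ * w + 1)

lemma psiAtInfinity_zero : psiAtInfinity σ A N Nh aa ρ ah ρh 0 = σ ^ 2 / 2 := by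
  simp [psiAtInfinity]

lemma analyticAt_psiAtInfinity : AnalyticAt ℝ (psiAtInfinity σ A N Nh aa ρ ah ρh) 0 := by
  unfold psiAtInfinity
  have hpole (a r : ℝ) : AnalyticAt ℝ (fun w => a / (r * w - 1)) 0 :=
    analyticAt_const.div ((analyticAt_const.mul analyticAt_id).sub analyticAt_const) (by simp)
  have hpole' (a r : ℝ) : AnalyticAt ℝ (fun w => a / (r * w + 1)) 0 :=
    analyticAt_const.div ((analyticAt_const.mul analyticAt_id).add analyticAt_const) (by simp)
  exact ((analyticAt_const.add (analyticAt_const.mul analyticAt_id)).add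
    ((analyticAt_id.pow 2).mul (Finset.analyticAt_fun_sum _ fun ℓ _ => hpole _ _))).sub
    ((analyticAt_id.pow 2).mul (Finset.analyticAt_fun_sum _ fun ℓ _ => hpole' _ _))

lemma psi_ofReal_eq_sq_mul_psiAtInfinity {x : ℝ} (hx : x ≠ 0) :
    psi σ A N Nh aa ρ ah ρh x = ((x ^ 2 * psiAtInfinity σ A N Nh aa ρ ah ρh x⁻¹ : ℝ) : ℂ) := by
  have hpole (a r : ℝ) : a / (r * x⁻¹ - 1) = x * (a / (r - x)) := by
    rw [show r * x⁻¹ - 1 = (r - x) / x by field_simp, div_div_eq_mul_div]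
    ring
  have hpole' (a r : ℝ) : a / (r * x⁻¹ + 1) = x * (a / (r + x)) := by
    rw [show r * x⁻¹ + 1 = (r + x) / x by field_simp, div_div_eq_mul_div]
    ring
  rw [psi_ofReal, Complex.ofReal_inj]
  simp only [psiAtInfinity, hpole, hpole', ← Finset.mul_sum]
  field_simp

lemma sq_mul_psiAtInfinity_eq {x q : ℝ} (hx : x ≠ 0)
    (hxq : psi σ A N Nh aa ρ ah ρh x = q) :
    x ^ 2 * psiAtInfinity σ A N Nh aa ρ ah ρh x⁻¹ = q :=
  Complex.ofReal_injective ((psi_ofReal_eq_sq_mul_psiAtInfinity hx).symm.trans hxq)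

lemma re_psi_ofReal_le (ha : ∀ ℓ ∈ Finset.Icc 1 N, 0 ≤ aa ℓ)
    (hah : ∀ ℓ ∈ Finset.Icc 1 Nh, 0 ≤ ah ℓ) {x : ℝ} (hx : 0 ≤ x)
    (hρ : ∀ ℓ ∈ Finset.Icc 1 N, ρ ℓ ≤ x) (hρh : ∀ ℓ ∈ Finset.Icc 1 Nh, 0 ≤ ρh ℓ) :
    (psi σ A N Nh aa ρ ah ρh x).re ≤ σ ^ 2 * x ^ 2 / 2 + A * x := by
  have hsum : ∑ ℓ ∈ Finset.Icc 1 N, aa ℓ / (ρ ℓ - x) ≤ 0 :=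
    Finset.sum_nonpos fun ℓ hℓ => div_nonpos_of_nonneg_of_nonpos (ha ℓ hℓ) (sub_nonpos.2 (hρ ℓ hℓ))
  have hsumh : 0 ≤ ∑ ℓ ∈ Finset.Icc 1 Nh, ah ℓ / (ρh ℓ + x) :=
    Finset.sum_nonneg fun ℓ hℓ => div_nonneg (hah ℓ hℓ) (add_nonneg (hρh ℓ hℓ) hx)
  rw [psi_ofReal, Complex.ofReal_re]
  linarith [mul_nonpos_of_nonneg_of_nonpos hx hsum, mul_nonneg hx hsumh]

lemma tendsto_root_atTop (ha : ∀ ℓ ∈ Finset.Icc 1 N, 0 ≤ aa ℓ)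
    (hah : ∀ ℓ ∈ Finset.Icc 1 Nh, 0 ≤ ah ℓ) (hρ0 : 0 ≤ ρ 0) (hρh0 : 0 ≤ ρh 0)
    (hρ : MonotoneOn ρ (Set.Iic N)) (hρh : MonotoneOn ρh (Set.Iic Nh)) {ζ : ℝ → ℝ}
    (hζ : ∀ᶠ q : ℝ in atTop, ρ N ≤ ζ q ∧ psi σ A N Nh aa ρ ah ρh (ζ q) = q) :
    Tendsto ζ atTop atTop := by
  have hρN : 0 ≤ ρ N := hρ0.trans (hρ (Nat.zero_le N) Set.self_mem_Iic (Nat.zero_le N))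
  refine tendsto_atTop_of_tendsto_comp_atTop (p := fun x => σ ^ 2 * x ^ 2 / 2 + A * x)
    (by fun_prop) (hζ.mono fun q hq => hq.1) (tendsto_atTop_mono' _ ?_ tendsto_id)
  filter_upwards [hζ] with q ⟨hle, hroot⟩
  have hρle : ∀ ℓ ∈ Finset.Icc 1 N, ρ ℓ ≤ ζ q := fun ℓ hℓ =>
    (hρ (Finset.mem_Icc.1 hℓ).2 Set.self_mem_Iic (Finset.mem_Icc.1 hℓ).2).trans hle
  have hρh_nonneg : ∀ ℓ ∈ Finset.Icc 1 Nh, 0 ≤ ρh ℓ := fun ℓ hℓ =>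
    hρh0.trans (hρh (Nat.zero_le Nh) (Finset.mem_Icc.1 hℓ).2 (Nat.zero_le ℓ))
  simpa [hroot] using
    re_psi_ofReal_le (σ := σ) (A := A) ha hah (hρN.trans hle) hρle hρh_nonneg

lemma exists_coeff_hasSum_roots_of_tendsto (hσ : 0 < σ) {z zh : ℝ → ℝ} (hz : Tendsto z atTop atTop)
    (hzh : Tendsto zh atTop atTop)
    (hroot : ∀ᶠ q : ℝ in atTop, psi σ A N Nh aa ρ ah ρh (z q) = q)
    (hrooth : ∀ᶠ q : ℝ in atTop, psi σ A N Nh aa ρ ah ρh (-(zh q : ℂ)) = q) :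
    ∃ (b : ℕ → ℝ) (K : ℝ), b 0 = √2 / σ ∧ b =O[atTop] (fun n => K ^ n) ∧
      ∀ᶠ q : ℝ in atTop, HasSum (fun n : ℕ => b n * q ^ ((1 - (n : ℝ)) / 2)) (z q) ∧
        HasSum (fun n : ℕ => (-1) ^ n * b n * q ^ ((1 - (n : ℝ)) / 2)) (zh q) := by
  have hlim : 0 < psiAtInfinity σ A N Nh aa ρ ah ρh 0 := by
    rw [psiAtInfinity_zero]
    positivity
  obtain ⟨b, K, hb0, hb, hexp⟩ := exists_coeff_hasSum_of_sq_mul_eq analyticAt_psiAtInfinity hlim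
  have hz_exp := hexp 1 z hz <| by
    filter_upwards [hroot, hz.eventually_gt_atTop 0] with q hq hpos
    simpa using sq_mul_psiAtInfinity_eq hpos.ne' hq
  have hzh_exp := hexp (-1) zh hzh <| by
    filter_upwards [hrooth, hzh.eventually_gt_atTop 0] with q hq hpos
    rw [← Complex.ofReal_neg] at hq
    simpa using sq_mul_psiAtInfinity_eq (neg_ne_zero.2 hpos.ne') hq
  refine ⟨b, K, ?_, hb, ?_⟩
  · rw [hb0, psiAtInfinity_zero, Real.sqrt_div (sq_nonneg σ), Real.sqrt_sq hσ.le, inv_div]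
  · filter_upwards [hz_exp, hzh_exp] with q hzq hzhq
    exact ⟨by simpa using hzq, hzhq⟩

lemma exists_coeff_hasSum_roots (hσ : 0 < σ) (ha : ∀ ℓ ∈ Finset.Icc 1 N, 0 ≤ aa ℓ)
    (hah : ∀ ℓ ∈ Finset.Icc 1 Nh, 0 ≤ ah ℓ) (hρ0 : 0 ≤ ρ 0) (hρh0 : 0 ≤ ρh 0)
    (hρ : MonotoneOn ρ (Set.Iic N)) (hρh : MonotoneOn ρh (Set.Iic Nh)) {ζ ζh : ℝ → ℝ}
    (hζ : ∀ᶠ q : ℝ in atTop, ρ N ≤ ζ q ∧ psi σ A N Nh aa ρ ah ρh (ζ q) = q)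
    (hζh : ∀ᶠ q : ℝ in atTop, ρh Nh ≤ ζh q ∧ psi σ A N Nh aa ρ ah ρh (-(ζh q : ℂ)) = q) :
    ∃ (b : ℕ → ℝ) (K : ℝ), b 0 = √2 / σ ∧ b =O[atTop] (fun n => K ^ n) ∧
      ∀ᶠ q : ℝ in atTop, HasSum (fun n : ℕ => b n * q ^ ((1 - (n : ℝ)) / 2)) (ζ q) ∧
        HasSum (fun n : ℕ => (-1) ^ n * b n * q ^ ((1 - (n : ℝ)) / 2)) (ζh q) :=
  exists_coeff_hasSum_roots_of_tendsto hσ (tendsto_root_atTop ha hah hρ0 hρh0 hρ hρh hζ)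
    (tendsto_root_atTop hah ha hρh0 hρ0 hρh hρ <| by simpa only [psi_neg] using hζh)
    (hζ.mono fun _ hq => hq.2) (hζh.mono fun _ hq => hq.2)

end LaplaceExponent

/-- For `σ > 0`: series expansions of `ζ_{N+1}`, `ζ̂_{N̂+1}` in powers of `q^{-1/2}` with
`b_{-1} = √2/σ`, differentiability in `q` on `(R, ∞)`, and the termwise-differentiated
series for the derivatives, which converge absolutely for `|q| > R`.
Here `b n` denotes the paper's `b_{n-1}`. -/
theorem extra_roots_derivative_series_sigma_pos
    (σ A : ℝ) (N Nh : ℕ) (aa ρ ah ρh : ℕ → ℝ)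
    (hσ : 0 < σ)
    (hpos : ∀ ℓ ∈ Finset.Icc 1 N, 0 < aa ℓ)
    (hposh : ∀ ℓ ∈ Finset.Icc 1 Nh, 0 < ah ℓ)
    (hρ0 : ρ 0 = 0) (hρh0 : ρh 0 = 0)
    (hmono : ∀ i j, i < j → j ≤ N → ρ i < ρ j)
    (hmonoh : ∀ i j, i < j → j ≤ Nh → ρh i < ρh j)
    (ζM ζhM : ℝ → ℝ)
    (hζM : ∀ q : ℝ, 0 < q → ρ N < ζM q ∧ psi σ A N Nh aa ρ ah ρh (ζM q : ℂ) = (q : ℂ))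
    (hζhM : ∀ q : ℝ, 0 < q → ρh Nh < ζhM q ∧
        psi σ A N Nh aa ρ ah ρh (-(ζhM q : ℝ) : ℂ) = (q : ℂ)) :
    ∃ R > (0 : ℝ), ∃ b : ℕ → ℝ, b 0 = Real.sqrt 2 / σ ∧
      -- series expansions of the roots themselves, for real q > R
      (∀ q : ℝ, R < q →
        ζM q = ∑' n : ℕ, b n * q ^ ((1 - (n : ℝ)) / 2) ∧
        ζhM q = ∑' n : ℕ, (-1 : ℝ) ^ n * b n * q ^ ((1 - (n : ℝ)) / 2)) ∧
      -- differentiability and the termwise-differentiated series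
      (∀ q : ℝ, R < q →
        HasDerivAt ζM
          (∑' n : ℕ, ((1 - (n : ℝ)) / 2) * b n * q ^ (-((n : ℝ) + 1) / 2)) q ∧
        HasDerivAt ζhM
          (-∑' n : ℕ, (-1 : ℝ) ^ (n + 1) * ((1 - (n : ℝ)) / 2) * b n
              * q ^ (-((n : ℝ) + 1) / 2)) q) ∧
      -- absolute convergence of both differentiated series for all complex |q| > R
      (∀ q : ℂ, R < ‖q‖ →
        Summable (fun n : ℕ =>
          ‖((((1 - (n : ℝ)) / 2) * b n : ℝ) : ℂ) * q ^ (-((n : ℂ) + 1) / 2)‖) ∧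
        Summable (fun n : ℕ =>
          ‖(((-1 : ℝ) ^ (n + 1) * ((1 - (n : ℝ)) / 2) * b n : ℝ) : ℂ)
              * q ^ (-((n : ℂ) + 1) / 2)‖)) := by
  have hρ : StrictMonoOn ρ (Set.Iic N) := fun i _ j hj hij => hmono i j hij hj
  have hρh : StrictMonoOn ρh (Set.Iic Nh) := fun i _ j hj hij => hmonoh i j hij hj
  obtain ⟨b, K, hb0, hb, hexp⟩ := exists_coeff_hasSum_roots hσ (fun ℓ hℓ => (hpos ℓ hℓ).le)
    (fun ℓ hℓ => (hposh ℓ hℓ).le) hρ0.ge hρh0.ge hρ.monotoneOn hρh.monotoneOn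
    ((eventually_gt_atTop 0).mono fun q hq => (hζM q hq).imp_left le_of_lt)
    ((eventually_gt_atTop 0).mono fun q hq => (hζhM q hq).imp_left le_of_lt)
  have hb_alt : (fun n => (-1) ^ n * b n) =O[atTop] (fun n => K ^ n) :=
    isBigO_norm_left.1 (by simpa using hb.norm_left)
  obtain ⟨R, hR⟩ := eventually_atTop.1
    (hexp.and ((eventually_gt_atTop (K ^ 2)).and (eventually_gt_atTop 0)))
  obtain ⟨-, hKR, hR0⟩ := hR R le_rfl
  have hexp_nhds (q : ℝ) (hq : R < q) := (eventually_gt_nhds hq).mono fun y hy => (hR y hy.le).1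
  refine ⟨R, hR0, b, hb0,
    fun q hq => (hR q hq.le).1.imp (fun h => h.tsum_eq.symm) (fun h => h.tsum_eq.symm),
    fun q hq => ⟨?_, ?_⟩, fun q hq => ⟨?_, ?_⟩⟩
  · exact hasDerivAt_of_eventually_hasSum hb (hKR.trans hq)
      ((hexp_nhds q hq).mono fun _ => And.left)
  · refine (hasDerivAt_of_eventually_hasSum hb_alt (hKR.trans hq)
      ((hexp_nhds q hq).mono fun _ => And.right)).congr_deriv ?_
    rw [← tsum_neg]
    exact tsum_congr fun n => by ring
  · exact summable_norm_mul_cpow_neg_add_one_div_two hb (hKR.trans hq)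
  · simpa [abs_mul] using summable_norm_mul_cpow_neg_add_one_div_two hb (hKR.trans hq)
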